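/- Let F be a Minkowski norm on ℝⁿ, let Ω ⊆ ℝⁿ be open, let p > 1, and let u_p ∈ C¹(Ω) be a weak solution of div(F(∇u)^{p−1} F_ξ(∇u)) = F(∇u)^p in Ω. Then u_p minimizes the functional J^p: for every precompact set K ⊂ Ω and every locally Lipschitz φ with φ = u_p on Ω∖K one has ∫_K ((1/p)·F(∇u_p)^p + u_p·F(∇u_p)^p) dx ≤ ∫_K ((1/p)·F(∇φ)^p + φ·F(∇u_p)^p) dx. -/

import Mathlib

open MeasureTheory Filter Topology Metric Set
open scoped RealInnerProductSpace NNReal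

noncomputable section

abbrev En (n : ℕ) := EuclideanSpace ℝ (Fin n)

/-- A Minkowski norm on ℝⁿ: a norm (convex, even, 1-homogeneous, positive away from 0)
which is smooth away from the origin and whose Hessian of `F²/2` is positive definite
on `ℝⁿ \ {0}`. -/
structure MinkowskiNorm (n : ℕ) where
  F : En n → ℝ
  convexOn : ConvexOn ℝ Set.univ F
  even : ∀ ξ, F (-ξ) = F ξ
  homog : ∀ c : ℝ, 0 ≤ c → ∀ ξ, F (c • ξ) = c * F ξ
  pos : ∀ ξ : En n, ξ ≠ 0 → 0 < F ξ
  smooth : ContDiffOn ℝ (⊤ : ℕ∞) F {(0 : En n)}ᶜ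
  elliptic : ∀ ξ : En n, ξ ≠ 0 → ∀ v : En n, v ≠ 0 →
    0 < fderiv ℝ (fun x => fderiv ℝ (fun y => F y ^ 2 / 2) x) ξ v v

/-- Locally Lipschitz on a set (i.e. `C^{0,1}_loc`). -/
def LocLipOn {n : ℕ} (f : En n → ℝ) (s : Set (En n)) : Prop :=
  ∀ x ∈ s, ∃ (K : ℝ≥0) (t : Set (En n)), t ∈ nhdsWithin x s ∧ LipschitzOnWith K f t

/-- Weak solution of `div(F_ξ(∇u)) = F(∇u)` in `Ω` in the sense of Huisken–Ilmanen's
minimization principle. -/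
def IsWeakSolIAMCF {n : ℕ} (N : MinkowskiNorm n) (Ω : Set (En n)) (u : En n → ℝ) : Prop :=
  LocLipOn u Ω ∧
  ∀ K : Set (En n), IsCompact (closure K) → closure K ⊆ Ω →
    ∀ φ : En n → ℝ, LocLipOn φ Ω → (∀ x ∈ Ω \ K, φ x = u x) →
      (∫ x in K, (N.F (gradient u x) + u x * N.F (gradient u x))) ≤
        ∫ x in K, (N.F (gradient φ x) + φ x * N.F (gradient u x))

/-- Weak subsolution: the minimization inequality holds for competitors `φ ≤ u`. -/
def IsWeakSubSolIAMCF {n : ℕ} (N : MinkowskiNorm n) (Ω : Set (En n)) (u : En n → ℝ) : Prop :=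
  LocLipOn u Ω ∧
  ∀ K : Set (En n), IsCompact (closure K) → closure K ⊆ Ω →
    ∀ φ : En n → ℝ, LocLipOn φ Ω → (∀ x ∈ Ω \ K, φ x = u x) → (∀ x ∈ Ω, φ x ≤ u x) →
      (∫ x in K, (N.F (gradient u x) + u x * N.F (gradient u x))) ≤
        ∫ x in K, (N.F (gradient φ x) + φ x * N.F (gradient u x))

/-- Weak supersolution: the minimization inequality holds for competitors `φ ≥ u`. -/
def IsWeakSuperSolIAMCF {n : ℕ} (N : MinkowskiNorm n) (Ω : Set (En n)) (u : En n → ℝ) : Prop :=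
  LocLipOn u Ω ∧
  ∀ K : Set (En n), IsCompact (closure K) → closure K ⊆ Ω →
    ∀ φ : En n → ℝ, LocLipOn φ Ω → (∀ x ∈ Ω \ K, φ x = u x) → (∀ x ∈ Ω, u x ≤ φ x) →
      (∫ x in K, (N.F (gradient u x) + u x * N.F (gradient u x))) ≤
        ∫ x in K, (N.F (gradient φ x) + φ x * N.F (gradient u x))

/-- A smooth compactly supported test function on `Ω`. -/
def IsTestFun {n : ℕ} (Ω : Set (En n)) (ψ : En n → ℝ) : Prop :=
  ContDiff ℝ (⊤ : ℕ∞) ψ ∧ HasCompactSupport ψ ∧ tsupport ψ ⊆ Ω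

/-- Weak solution of the Finsler `p`-Laplace equation `div(F(∇v)^{p-1} F_ξ(∇v)) = 0` in `Ω`. -/
def IsWeakPHarmonic {n : ℕ} (N : MinkowskiNorm n) (Ω : Set (En n)) (p : ℝ)
    (v : En n → ℝ) : Prop :=
  ∀ ψ : En n → ℝ, IsTestFun Ω ψ →
    (∫ x in Ω, N.F (gradient v x) ^ (p - 1) *
      ⟪gradient N.F (gradient v x), gradient ψ x⟫) = 0

/-- Weak solution of `div(F(∇u)^{p-1} F_ξ(∇u)) = F(∇u)^p` in `Ω`. -/
def IsWeakPSol {n : ℕ} (N : MinkowskiNorm n) (Ω : Set (En n)) (p : ℝ)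
    (u : En n → ℝ) : Prop :=
  ∀ ψ : En n → ℝ, IsTestFun Ω ψ →
    (∫ x in Ω, N.F (gradient u x) ^ (p - 1) *
      ⟪gradient N.F (gradient u x), gradient ψ x⟫) =
      - ∫ x in Ω, N.F (gradient u x) ^ p * ψ x

/-- The polar (dual) norm `F^o(x) = sup_{ξ ≠ 0} ⟨ξ, x⟩ / F(ξ)`. -/
def polarF {n : ℕ} (N : MinkowskiNorm n) (x : En n) : ℝ :=
  sSup {c : ℝ | ∃ ξ : En n, ξ ≠ 0 ∧ c = ⟪ξ, x⟫ / N.F ξ}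

/-- The Wulff shape of radius `r` centered at `x₀`: `{x : F^o(x - x₀) < r}`. -/
def Wulff {n : ℕ} (N : MinkowskiNorm n) (r : ℝ) (x₀ : En n) : Set (En n) :=
  {x | polarF N (x - x₀) < r}

/-- `Ω` is an open set with smooth boundary: it is a smooth sublevel set of a smooth
function with nonvanishing gradient on the boundary. -/
def HasSmoothBoundary {n : ℕ} (Ω : Set (En n)) : Prop :=
  ∃ f : En n → ℝ, ContDiff ℝ (⊤ : ℕ∞) f ∧ Ω = {x | f x < 0} ∧
    ∀ x ∈ frontier Ω, fderiv ℝ f x ≠ 0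

/-- `C¹` on `s` with locally Hölder continuous gradient (i.e. `C^{1,α}_loc`). -/
def C1LocHolderOn {n : ℕ} (v : En n → ℝ) (s : Set (En n)) : Prop :=
  ContDiffOn ℝ 1 v s ∧
  ∀ x ∈ s, ∃ (α C : ℝ≥0), 0 < α ∧ (α : ℝ) ≤ 1 ∧
    ∃ t ∈ nhdsWithin x s, HolderOnWith C α (fun y => gradient v y) t

/-- Divergence of a vector field on `ℝⁿ`. -/
def divg {n : ℕ} (V : En n → En n) (x : En n) : ℝ :=
  ∑ i : Fin n, fderiv ℝ V x (EuclideanSpace.single i 1) i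

/-- Tangent-line inequality for the convex function `s ↦ s ^ p / p` on `[0, ∞)`. -/
lemma rpow_div_add_mul_sub_le {p s t : ℝ} (hp : 1 < p) (hs : 0 ≤ s) (ht : 0 ≤ t) :
    1 / p * t ^ p + t ^ (p - 1) * (s - t) ≤ 1 / p * s ^ p := by
  have hp0 : 0 < p := by linarith
  rcases ht.eq_or_lt with rfl | ht
  · rw [Real.zero_rpow hp0.ne', Real.zero_rpow (by linarith)]
    simpa using mul_nonneg (inv_nonneg.2 hp0.le) (Real.rpow_nonneg hs p)
  · have h := one_add_mul_self_le_rpow_one_add (s := s / t - 1)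
      (by linarith [div_nonneg hs ht.le]) hp.le
    rw [add_sub_cancel, Real.div_rpow hs ht.le, le_div_iff₀ (Real.rpow_pos_of_pos ht p)] at h
    have e : t ^ p = t ^ (p - 1) * t := by
      rw [← Real.rpow_add_one ht.ne', sub_add_cancel]
    rw [div_mul_eq_mul_div, div_mul_eq_mul_div, one_mul, one_mul, le_div_iff₀ hp0]
    calc (t ^ p / p + t ^ (p - 1) * (s - t)) * p
        = (1 + p * (s / t - 1)) * t ^ p := by rw [e]; field_simp
      _ ≤ s ^ p := h

/-- A convex function lies above its tangent hyperplanes. -/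
lemma ConvexOn.add_fderiv_sub_le {E : Type*} [NormedAddCommGroup E] [NormedSpace ℝ E]
    {f : E → ℝ} (hf : ConvexOn ℝ univ f) {a : E} (ha : DifferentiableAt ℝ f a) (b : E) :
    f a + fderiv ℝ f a (b - a) ≤ f b := by
  have hc := hf.comp_affineMap (AffineMap.lineMap (k := ℝ) a b)
  have hd : HasDerivAt (f ∘ AffineMap.lineMap (k := ℝ) a b) (fderiv ℝ f a (b - a)) 0 := by
    refine HasFDerivAt.comp_hasDerivAt (0 : ℝ) ?_ AffineMap.hasDerivAt_lineMap
    simpa using ha.hasFDerivAt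
  have h := hc.le_slope_of_hasDerivAt (mem_univ 0) (mem_univ 1) one_pos hd
  simp only [slope, Function.comp_apply, AffineMap.lineMap_apply_zero,
    AffineMap.lineMap_apply_one, sub_zero, inv_one, one_smul, vsub_eq_sub] at h
  linarith

/-- The gradient of a Lipschitz function vanishes almost everywhere on its zero set. -/
lemma LipschitzWith.ae_fderiv_eq_zero_of_eq_zero {E : Type*} [NormedAddCommGroup E]
    [NormedSpace ℝ E] [FiniteDimensional ℝ E] [MeasurableSpace E] [BorelSpace E]
    (μ : Measure E) [μ.IsAddHaarMeasure] {C : ℝ≥0} {w : E → ℝ} (hw : LipschitzWith C w) :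
    ∀ᵐ x ∂μ, w x = 0 → fderiv ℝ w x = 0 := by
  have hn : LipschitzWith C (fun x => ‖w x‖) := by
    simpa only [one_mul, Function.comp_def] using lipschitzWith_one_norm.comp hw
  filter_upwards [hn.ae_differentiableAt (μ := μ)] with x hx h0
  have hmin : IsLocalMin (fun x => ‖w x‖) x := Eventually.of_forall fun y => by simp [h0]
  have h := hx.hasFDerivAt
  rw [hmin.fderiv_eq_zero, hasFDerivAt_iff_isLittleO] at h
  refine HasFDerivAt.fderiv ?_
  rw [hasFDerivAt_iff_isLittleO]
  simpa [h0] using h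

/-- A locally Lipschitz function with compact support is Lipschitz. -/
lemma LocallyLipschitz.exists_lipschitzWith_of_hasCompactSupport {E : Type*}
    [NormedAddCommGroup E] [ProperSpace E] {w : E → ℝ} (hw : LocallyLipschitz w)
    (hs : HasCompactSupport w) : ∃ C, LipschitzWith C w := by
  obtain ⟨R, hR⟩ := hs.isBounded.subset_closedBall 0
  obtain ⟨L, hL⟩ := (hw.locallyLipschitzOn (s := closedBall 0 (R + 1))
    ).exists_lipschitzOnWith_of_compact (isCompact_closedBall 0 (R + 1))
  obtain ⟨M, hM⟩ := hs.exists_bound_of_continuous hw.continuous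
  have hM0 : 0 ≤ M := (norm_nonneg _).trans (hM 0)
  have out : ∀ y, R < ‖y‖ → w y = 0 := fun y hy => by
    refine image_eq_zero_of_notMem_tsupport fun h => ?_
    have := hR h
    rw [mem_closedBall_zero_iff] at this
    linarith
  have key : ∀ x y, ‖x‖ ≤ ‖y‖ → ‖w x - w y‖ ≤ max L ⟨M, hM0⟩ * ‖x - y‖ := by
    intro x y hxy
    rcases le_or_gt ‖y‖ (R + 1) with h | h
    · refine (hL.norm_sub_le (by simpa using hxy.trans h) (by simpa using h)).trans ?_
      gcongr
      exact le_max_left _ _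
    · rw [out y (by linarith), sub_zero]
      rcases le_or_gt ‖x‖ R with h' | h'
      · have h1 : 1 ≤ ‖x - y‖ := by
          have := norm_sub_norm_le y x
          rw [norm_sub_rev] at this
          linarith
        calc ‖w x‖ ≤ M * 1 := by simpa using hM x
          _ ≤ max (L : ℝ) M * ‖x - y‖ := by
            gcongr
            exact le_max_right _ _
      · rw [out x h', norm_zero]
        positivity
  refine ⟨max L ⟨M, hM0⟩, LipschitzWith.of_dist_le_mul fun x y => ?_⟩
  rw [dist_eq_norm, dist_eq_norm]
  rcases le_total ‖x‖ ‖y‖ with h | h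
  · exact key x y h
  · rw [norm_sub_rev, norm_sub_rev x]
    exact key y x h

open scoped Convolution in
open ContinuousLinearMap in
/-- Differentiation commutes with mollification for Lipschitz functions. -/
lemma ContDiffBump.hasFDerivAt_normed_convolution {E : Type*} [NormedAddCommGroup E]
    [NormedSpace ℝ E] [FiniteDimensional ℝ E] [MeasurableSpace E] [BorelSpace E]
    [HasContDiffBump E] (μ : Measure E) [μ.IsAddHaarMeasure] (ρ : ContDiffBump (0 : E))
    {C : ℝ≥0} {w : E → ℝ} (hw : LipschitzWith C w) (x : E) :
    HasFDerivAt (ρ.normed μ ⋆[lsmul ℝ ℝ, μ] w)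
      ((ρ.normed μ ⋆[lsmul ℝ ℝ, μ] fderiv ℝ w) x) x := by
  have hρ : Continuous (ρ.normed μ) := ρ.continuous_normed
  refine (hasFDerivAt_integral_of_dominated_loc_of_lip (𝕜 := ℝ) (μ := μ) (s := univ)
    (F := fun x t => ρ.normed μ t * w (x - t))
    (F' := fun t => ρ.normed μ t • fderiv ℝ w (x - t))
    (bound := fun t => ρ.normed μ t * C) univ_mem ?_ ?_ ?_ ?_ ?_ ?_).2
  · refine Eventually.of_forall fun y => Continuous.aestronglyMeasurable ?_
    exact hρ.mul (hw.continuous.comp (continuous_const.sub continuous_id))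
  · refine Continuous.integrable_of_hasCompactSupport ?_ ρ.hasCompactSupport_normed.mul_right
    exact hρ.mul (hw.continuous.comp (continuous_const.sub continuous_id))
  · refine (hρ.measurable.smul ?_).aestronglyMeasurable
    exact (measurable_fderiv ℝ w).comp (measurable_const.sub measurable_id)
  · refine Eventually.of_forall fun t => LipschitzOnWith.of_dist_le_mul fun y _ z _ => ?_
    rw [Real.dist_eq, ← mul_sub, abs_mul, Real.coe_nnabs, abs_mul, mul_assoc]
    gcongr
    have := hw.dist_le_mul (y - t) (z - t)
    rwa [dist_sub_right, Real.dist_eq, ← NNReal.abs_eq] at this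
  · exact ρ.integrable_normed.mul_const _
  · have := (quasiMeasurePreserving_sub_left μ x).ae (hw.ae_differentiableAt (μ := μ))
    filter_upwards [this] with t ht
    have h := (ht.hasFDerivAt.comp x ((hasFDerivAt_id x).sub_const t)).const_mul (ρ.normed μ t)
    simpa [Function.comp_def] using h

open scoped Convolution in
open ContinuousLinearMap in
lemma ContDiffBump.norm_normed_convolution_le {E G : Type*} [NormedAddCommGroup E]
    [NormedSpace ℝ E] [FiniteDimensional ℝ E] [MeasurableSpace E] [BorelSpace E]
    [HasContDiffBump E] [NormedAddCommGroup G] [NormedSpace ℝ G]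
    (μ : Measure E) [μ.IsAddHaarMeasure] (ρ : ContDiffBump (0 : E))
    {M : ℝ} {g : E → G} (hg : ∀ x, ‖g x‖ ≤ M) (x : E) :
    ‖(ρ.normed μ ⋆[lsmul ℝ ℝ, μ] g) x‖ ≤ M := by
  calc ‖(ρ.normed μ ⋆[lsmul ℝ ℝ, μ] g) x‖ ≤ ∫ t, ρ.normed μ t * M ∂μ := by
        refine norm_integral_le_of_norm_le (ρ.integrable_normed.mul_const M)
          (Eventually.of_forall fun t => ?_)
        rw [lsmul_apply, norm_smul, Real.norm_of_nonneg (ρ.nonneg_normed t)]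
        exact mul_le_mul_of_nonneg_left (hg _) (ρ.nonneg_normed t)
    _ = M := by rw [integral_mul_const, ρ.integral_normed, one_mul]

lemma measurable_gradient {n : ℕ} (f : En n → ℝ) : Measurable (gradient f) :=
  (InnerProductSpace.toDual ℝ (En n)).symm.continuous.measurable.comp (measurable_fderiv ℝ f)

lemma norm_gradient {n : ℕ} (f : En n → ℝ) (x : En n) : ‖gradient f x‖ = ‖fderiv ℝ f x‖ :=
  LinearIsometryEquiv.norm_map _ _

open scoped Convolution in
open ContinuousLinearMap in
/-- An integral identity valid for all smooth compactly supported test functions extends to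
Lipschitz compactly supported test functions. -/
lemma integral_inner_gradient_eq_of_lipschitzWith {n : ℕ} {Ω : Set (En n)} (hΩ : IsOpen Ω)
    {A : En n → En n} {b : En n → ℝ} (hA : Measurable A) (hb : Measurable b)
    (hAb : ∀ C, IsCompact C → C ⊆ Ω → ∃ M, ∀ x ∈ C, ‖A x‖ ≤ M)
    (hbb : ∀ C, IsCompact C → C ⊆ Ω → ∃ M, ∀ x ∈ C, ‖b x‖ ≤ M)
    (h : ∀ ψ, IsTestFun Ω ψ →
      ∫ x in Ω, ⟪A x, gradient ψ x⟫ = -∫ x in Ω, b x * ψ x)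
    {w : En n → ℝ} {L : ℝ≥0} (hw : LipschitzWith L w) (hs : HasCompactSupport w)
    (hsub : tsupport w ⊆ Ω) :
    ∫ x in Ω, ⟪A x, gradient w x⟫ = -∫ x in Ω, b x * w x := by
  obtain ⟨δ, hδ, hδΩ⟩ := hs.isCompact.exists_cthickening_subset_open hΩ hsub
  set C := cthickening δ (tsupport w)
  have hC : IsCompact C := hs.isCompact.cthickening
  obtain ⟨MA, hMA⟩ := hAb C hC hδΩ
  obtain ⟨Mb, hMb⟩ := hbb C hC hδΩ
  obtain ⟨W, hW⟩ := hs.exists_bound_of_continuous hw.continuous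
  have hL : ∀ x, ‖fderiv ℝ w x‖ ≤ L := fun x => norm_fderiv_le_of_lipschitz ℝ hw
  let ρ : ℕ → ContDiffBump (0 : En n) := fun k =>
    ⟨δ / (k + 1) / 2, δ / (k + 1), by positivity, half_lt_self (by positivity)⟩
  have hρ : Tendsto (fun k => (ρ k).rOut) atTop (𝓝 0) := by
    simpa [ρ, div_eq_mul_inv] using
      (tendsto_one_div_add_atTop_nhds_zero_nat (𝕜 := ℝ)).const_mul δ
  have hρδ : ∀ k, (ρ k).rOut ≤ δ := fun k =>
    div_le_self hδ.le (by linarith [Nat.cast_nonneg (α := ℝ) k])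
  let v : ℕ → En n → ℝ := fun k => (ρ k).normed volume ⋆[lsmul ℝ ℝ, volume] w
  have hvd : ∀ k x, fderiv ℝ (v k) x =
      ((ρ k).normed volume ⋆[lsmul ℝ ℝ, volume] fderiv ℝ w) x := fun k x =>
    ((ρ k).hasFDerivAt_normed_convolution volume hw x).fderiv
  have hvsmooth : ∀ k, ContDiff ℝ (⊤ : ℕ∞) (v k) := fun k =>
    (ρ k).hasCompactSupport_normed.contDiff_convolution_left _ (ρ k).contDiff_normed
      hw.continuous.locallyIntegrable
  have hvC : ∀ k, tsupport (v k) ⊆ C := by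
    intro k
    refine closure_minimal ?_ isClosed_cthickening
    refine (support_convolution_subset _).trans ?_
    rintro _ ⟨y, hy, z, hz, rfl⟩
    rw [(ρ k).support_normed_eq, mem_ball_zero_iff] at hy
    refine mem_cthickening_of_dist_le _ z δ _ (subset_tsupport w hz) ?_
    simpa using hy.le.trans (hρδ k)
  have hvtest : ∀ k, IsTestFun Ω (v k) := fun k =>
    ⟨hvsmooth k, hC.of_isClosed_subset (isClosed_tsupport _) (hvC k), (hvC k).trans hδΩ⟩
  have hvW : ∀ k x, ‖v k x‖ ≤ W := fun k x => (ρ k).norm_normed_convolution_le volume hW x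
  have hvL : ∀ k x, ‖gradient (v k) x‖ ≤ L := fun k x => by
    rw [norm_gradient, hvd]
    exact (ρ k).norm_normed_convolution_le volume hL x
  have hbound : ∀ M : ℝ, Integrable (C.indicator fun _ => M) (volume.restrict Ω) := fun M =>
    ((integrable_indicator_iff hC.isClosed.measurableSet).2
      (integrableOn_const hC.measure_lt_top.ne)).restrict
  have lim1 : Tendsto (fun k => ∫ x in Ω, ⟪A x, gradient (v k) x⟫) atTop
      (𝓝 (∫ x in Ω, ⟪A x, gradient w x⟫)) := by
    refine tendsto_integral_of_dominated_convergence _ (fun k => ?_) (hbound (MA * L))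
      (fun k => Eventually.of_forall fun x => ?_) ?_
    · exact (hA.inner (measurable_gradient _)).aestronglyMeasurable
    · by_cases hx : x ∈ C
      · rw [indicator_of_mem hx]
        refine (norm_inner_le_norm _ _).trans ?_
        exact mul_le_mul (hMA x hx) (hvL k x) (norm_nonneg _) ((norm_nonneg _).trans (hMA x hx))
      · have h0 : gradient (v k) x = 0 := by
          rw [← norm_eq_zero, norm_gradient, norm_eq_zero]
          exact image_eq_zero_of_notMem_tsupport fun hx' =>
            hx (hvC k (tsupport_fderiv_subset ℝ hx'))
        rw [indicator_of_notMem hx, h0, inner_zero_right, norm_zero]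
    · have hli : LocallyIntegrable (fderiv ℝ w) (volume : Measure (En n)) :=
        (locallyIntegrable_const (L : ℝ)).mono (measurable_fderiv ℝ w).aestronglyMeasurable
          (Eventually.of_forall fun x => by simpa using hL x)
      have hae := ContDiffBump.ae_convolution_tendsto_right_of_locallyIntegrable
        (φ := ρ) (K := 2) hρ (Eventually.of_forall fun k => by simp [ρ]; linarith) hli
      filter_upwards [ae_restrict_of_ae hae] with x hx
      refine Tendsto.inner tendsto_const_nhds ?_
      simp only [← hvd] at hx
      exact ((InnerProductSpace.toDual ℝ (En n)).symm.continuous.tendsto _).comp hx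
  have lim2 : Tendsto (fun k => ∫ x in Ω, b x * v k x) atTop (𝓝 (∫ x in Ω, b x * w x)) := by
    refine tendsto_integral_of_dominated_convergence _ (fun k => ?_) (hbound (Mb * W))
      (fun k => Eventually.of_forall fun x => ?_) (Eventually.of_forall fun x => ?_)
    · exact (hb.mul (hvsmooth k).continuous.measurable).aestronglyMeasurable
    · by_cases hx : x ∈ C
      · rw [indicator_of_mem hx, norm_mul]
        exact mul_le_mul (hMb x hx) (hvW k x) (norm_nonneg _) ((norm_nonneg _).trans (hMb x hx))
      · rw [indicator_of_notMem hx,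
          image_eq_zero_of_notMem_tsupport fun hx' => hx (hvC k hx'), mul_zero, norm_zero]
    · exact (ContDiffBump.convolution_tendsto_right_of_continuous hρ hw.continuous x).const_mul _
  refine tendsto_nhds_unique lim1 ?_
  simpa only [fun k => h (v k) (hvtest k)] using lim2.neg

namespace MinkowskiNorm

variable {n : ℕ} (N : MinkowskiNorm n)

lemma apply_zero : N.F 0 = 0 := by
  simpa using N.homog 0 le_rfl 0

lemma nonneg (ξ : En n) : 0 ≤ N.F ξ := by
  rcases eq_or_ne ξ 0 with rfl | h
  · exact N.apply_zero.ge
  · exact (N.pos ξ h).le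

lemma locallyLipschitz : LocallyLipschitz N.F := N.convexOn.locallyLipschitz

lemma differentiableAt {ξ : En n} (h : ξ ≠ 0) : DifferentiableAt ℝ N.F ξ :=
  (N.smooth.contDiffAt (isOpen_compl_singleton.mem_nhds h)).differentiableAt (by simp)

/-- `F` is bounded, and has bounded gradient, on bounded sets. -/
lemma exists_bound (R : ℝ) : ∃ M, ∀ ξ, ‖ξ‖ ≤ R → N.F ξ ≤ M ∧ ‖gradient N.F ξ‖ ≤ M := by
  obtain ⟨L, hL⟩ := (N.locallyLipschitz.locallyLipschitzOn (s := closedBall 0 (R + 1))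
    ).exists_lipschitzOnWith_of_compact (isCompact_closedBall 0 (R + 1))
  obtain ⟨M, hM⟩ := (isCompact_closedBall (0 : En n) R).exists_bound_of_continuousOn
    N.locallyLipschitz.continuous.continuousOn
  refine ⟨max M L, fun ξ hξ => ⟨?_, ?_⟩⟩
  · exact (le_abs_self _).trans ((hM ξ (by simpa using hξ)).trans (le_max_left _ _))
  · rw [norm_gradient]
    refine (norm_fderiv_le_of_lipschitzOn ℝ ?_ hL).trans (le_max_right _ _)
    exact mem_of_superset (isOpen_ball.mem_nhds (by simpa using hξ.trans_lt (lt_add_one R)))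
      ball_subset_closedBall

/-- Convexity of `ξ ↦ F ξ ^ p / p`, in gradient form. -/
lemma rpow_add_inner_le {p : ℝ} (hp : 1 < p) (ξ η : En n) :
    1 / p * N.F ξ ^ p + N.F ξ ^ (p - 1) * ⟪gradient N.F ξ, η⟫ ≤ 1 / p * N.F (ξ + η) ^ p := by
  rcases eq_or_ne ξ 0 with rfl | h
  · rw [N.apply_zero, Real.zero_rpow (by linarith), Real.zero_rpow (by linarith)]
    simpa using mul_nonneg (inv_nonneg.2 (by linarith)) (Real.rpow_nonneg (N.nonneg η) p)
  · refine le_trans ?_ (rpow_div_add_mul_sub_le hp (N.nonneg (ξ + η)) (N.nonneg ξ))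
    have := N.convexOn.add_fderiv_sub_le (N.differentiableAt h) (ξ + η)
    rw [add_sub_cancel_left] at this
    rw [inner_gradient_left]
    gcongr
    · exact Real.rpow_nonneg (N.nonneg ξ) _
    · linarith

end MinkowskiNorm

/-- A relatively compact set has a measurable hull, inside its closure, to which the Lebesgue
measure restricts in the same way. -/
lemma exists_measurableSet_restrict_eq {n : ℕ} {K : Set (En n)} (hK : IsCompact (closure K)) :
    ∃ K', MeasurableSet K' ∧ K ⊆ K' ∧ K' ⊆ closure K ∧
      (volume : Measure (En n)).restrict K' = volume.restrict K := by
  have hfin : volume K ≠ ⊤ := ((measure_mono subset_closure).trans_lt hK.measure_lt_top).ne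
  have hsub : K ⊆ toMeasurable volume K ∩ closure K :=
    subset_inter (subset_toMeasurable _ _) subset_closure
  have hmeas : MeasurableSet (toMeasurable volume K ∩ closure K) :=
    (measurableSet_toMeasurable _ _).inter isClosed_closure.measurableSet
  refine ⟨_, hmeas, hsub, inter_subset_right, ?_⟩
  rw [← Measure.restrict_toMeasurable hfin]
  refine Measure.restrict_congr_set (ae_eq_of_subset_of_measure_ge inter_subset_left ?_
    hmeas.nullMeasurableSet ?_)
  · rw [measure_toMeasurable]
    exact measure_mono hsub
  · rwa [measure_toMeasurable]

/-- The difference of a locally Lipschitz function and a `C¹` function which agree outside a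
relatively compact set, extended by zero, is Lipschitz. -/
lemma exists_lipschitzWith_indicator_sub {n : ℕ} {Ω K : Set (En n)} (hΩ : IsOpen Ω)
    (hK : IsCompact (closure K)) {u φ : En n → ℝ} (hu : ContDiffOn ℝ 1 u Ω)
    (hφ : LocLipOn φ Ω) (hsupp : tsupport (Ω.indicator (φ - u)) ⊆ closure K)
    (hKΩ : closure K ⊆ Ω) : ∃ L, LipschitzWith L (Ω.indicator (φ - u)) := by
  refine LocallyLipschitz.exists_lipschitzWith_of_hasCompactSupport (fun x => ?_)
    (hK.of_isClosed_subset (isClosed_tsupport _) hsupp)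
  by_cases hx : x ∈ Ω
  · obtain ⟨L₁, s, hs, hL₁⟩ := hφ x hx
    obtain ⟨L₂, t, ht, hL₂⟩ := (hu.contDiffAt (hΩ.mem_nhds hx)).exists_lipschitzOnWith
    rw [hΩ.nhdsWithin_eq hx] at hs
    refine ⟨L₁ + L₂, s ∩ t ∩ Ω, inter_mem (inter_mem hs ht) (hΩ.mem_nhds hx), ?_⟩
    refine LipschitzOnWith.of_dist_le_mul fun y hy z hz => ?_
    rw [indicator_of_mem hy.2, indicator_of_mem hz.2]
    have h₁ := hL₁.dist_le_mul y hy.1.1 z hz.1.1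
    have h₂ := hL₂.dist_le_mul y hy.1.2 z hz.1.2
    have h₃ := dist_sub_sub_le (φ y) (u y) (φ z) (u z)
    simp only [Pi.sub_apply, NNReal.coe_add]
    linarith
  · refine ⟨0, (closure K)ᶜ, isClosed_closure.isOpen_compl.mem_nhds fun h => hx (hKΩ h), ?_⟩
    refine LipschitzOnWith.of_dist_le_mul fun y hy z hz => ?_
    rw [image_eq_zero_of_notMem_tsupport fun h => hy (hsupp h),
      image_eq_zero_of_notMem_tsupport fun h => hz (hsupp h)]
    simp

/-- A `C¹` weak solution `u_p` of `div(F(∇u)^{p-1}F_ξ(∇u)) = F(∇u)^p`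
in `Ω` minimizes the functional
`J^p(φ) = ∫_K ((1/p)F(∇φ)^p + φ F(∇u_p)^p)` among locally Lipschitz competitors
agreeing with `u_p` outside a precompact set. -/
theorem statement14 (n : ℕ) (N : MinkowskiNorm n)
    (Ω : Set (En n)) (hΩ : IsOpen Ω)
    (p : ℝ) (hp : 1 < p)
    (u : En n → ℝ) (hC1 : ContDiffOn ℝ 1 u Ω)
    (hsol : IsWeakPSol N Ω p u) :
    ∀ K : Set (En n), IsCompact (closure K) → closure K ⊆ Ω →
      ∀ φ : En n → ℝ, LocLipOn φ Ω → (∀ x ∈ Ω \ K, φ x = u x) →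
        (∫ x in K, ((1 / p) * N.F (gradient u x) ^ p + u x * N.F (gradient u x) ^ p)) ≤
          ∫ x in K, ((1 / p) * N.F (gradient φ x) ^ p + φ x * N.F (gradient u x) ^ p) := by
  intro K₀ hK₀ hK₀Ω φ hφ hφu₀
  obtain ⟨K, hKm, hK₀K, hKcl, hrestrict⟩ := exists_measurableSet_restrict_eq hK₀
  rw [← hrestrict]
  have hφu : ∀ x ∈ Ω \ K, φ x = u x := fun x hx => hφu₀ x ⟨hx.1, fun h => hx.2 (hK₀K h)⟩
  have hKΩ : K ⊆ Ω := hKcl.trans hK₀Ω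
  have hKfin : volume K ≠ ⊤ := ((measure_mono hKcl).trans_lt hK₀.measure_lt_top).ne
  set w := Ω.indicator (φ - u) with hwdef
  have hwK : ∀ x, x ∉ K → w x = 0 := fun x hx => by
    by_cases hxΩ : x ∈ Ω
    · rw [hwdef, indicator_of_mem hxΩ, Pi.sub_apply, hφu x ⟨hxΩ, hx⟩, sub_self]
    · exact indicator_of_notMem hxΩ _
  have hwsupp : tsupport w ⊆ closure K₀ :=
    closure_minimal (fun x hx => hKcl (by_contra fun h => hx (hwK x h))) isClosed_closure
  obtain ⟨L, hL⟩ := exists_lipschitzWith_indicator_sub hΩ hK₀ hC1 hφ hwsupp hK₀Ω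
  rw [← hwdef] at hL
  have hφeq : ∀ x ∈ Ω, φ x = u x + w x := fun x hx => by
    rw [hwdef, indicator_of_mem hx, Pi.sub_apply, add_sub_cancel]
  have hF : Measurable N.F := N.locallyLipschitz.continuous.measurable
  have hFu : Measurable fun x => N.F (gradient u x) := hF.comp (measurable_gradient u)
  have hFφ : Measurable fun x => N.F (gradient φ x) := hF.comp (measurable_gradient φ)
  -- Local bounds for the coefficients of the equation.
  have hgrad : ∀ C, IsCompact C → C ⊆ Ω → ∃ R, ∀ x ∈ C, ‖gradient u x‖ ≤ R := by
    intro C hC hCΩ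
    obtain ⟨R, hR⟩ := hC.exists_bound_of_continuousOn
      ((hC1.continuousOn_fderiv_of_isOpen hΩ le_rfl).mono hCΩ)
    exact ⟨R, fun x hx => (norm_gradient u x).le.trans (hR x hx)⟩
  have hpow : ∀ {ξ : En n} {M q : ℝ}, 0 ≤ q → N.F ξ ≤ M → ‖N.F ξ ^ q‖ ≤ M ^ q := by
    intro ξ M q hq h
    rw [Real.norm_of_nonneg (Real.rpow_nonneg (N.nonneg ξ) q)]
    exact Real.rpow_le_rpow (N.nonneg ξ) h hq
  let A : En n → En n := fun x => N.F (gradient u x) ^ (p - 1) • gradient N.F (gradient u x)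
  have hA : Measurable A :=
    (hFu.pow_const _).smul ((measurable_gradient N.F).comp (measurable_gradient u))
  have hAb : ∀ C, IsCompact C → C ⊆ Ω → ∃ M, ∀ x ∈ C, ‖A x‖ ≤ M := by
    intro C hC hCΩ
    obtain ⟨R, hR⟩ := hgrad C hC hCΩ
    obtain ⟨M, hM⟩ := N.exists_bound R
    refine ⟨M ^ (p - 1) * M, fun x hx => ?_⟩
    obtain ⟨h₁, h₂⟩ := hM _ (hR x hx)
    rw [norm_smul]
    have h₃ := hpow (by linarith : 0 ≤ p - 1) h₁
    exact mul_le_mul h₃ h₂ (norm_nonneg _) ((norm_nonneg _).trans h₃)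
  have hbb : ∀ C, IsCompact C → C ⊆ Ω → ∃ M, ∀ x ∈ C, ‖N.F (gradient u x) ^ p‖ ≤ M := by
    intro C hC hCΩ
    obtain ⟨R, hR⟩ := hgrad C hC hCΩ
    obtain ⟨M, hM⟩ := N.exists_bound R
    exact ⟨M ^ p, fun x hx => hpow (by linarith) (hM _ (hR x hx)).1⟩
  have hweak := integral_inner_gradient_eq_of_lipschitzWith hΩ hA (hFu.pow_const p) hAb hbb
    (fun ψ hψ => by simpa only [A, real_inner_smul_left] using hsol ψ hψ) hL
    (hK₀.of_isClosed_subset (isClosed_tsupport _) hwsupp) (hwsupp.trans hK₀Ω)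
  have hred₁ : ∫ x in Ω, ⟪A x, gradient w x⟫ = ∫ x in K, ⟪A x, gradient w x⟫ := by
    refine setIntegral_eq_of_subset_of_ae_sdiff_eq_zero hΩ.measurableSet.nullMeasurableSet hKΩ ?_
    filter_upwards [hL.ae_fderiv_eq_zero_of_eq_zero volume] with x hx hxK
    have h0 : gradient w x = 0 := by
      rw [← norm_eq_zero, norm_gradient, hx (hwK x hxK.2), norm_zero]
    rw [h0, inner_zero_right]
  have hred₂ : ∫ x in Ω, N.F (gradient u x) ^ p * w x
      = ∫ x in K, N.F (gradient u x) ^ p * w x :=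
    setIntegral_eq_of_subset_of_forall_sdiff_eq_zero hΩ.measurableSet hKΩ
      fun x hx => by rw [hwK x hx.2, mul_zero]
  rw [hred₁, hred₂] at hweak
  -- The gradient of the competitor.
  have hgφ : ∀ᵐ x, x ∈ K → gradient φ x = gradient u x + gradient w x := by
    filter_upwards [hL.ae_differentiableAt (μ := volume)] with x hx hxK
    have hxΩ := hΩ.mem_nhds (hKΩ hxK)
    have hu := (hC1.contDiffAt hxΩ).differentiableAt one_ne_zero
    have hev : φ =ᶠ[𝓝 x] u + w := by
      filter_upwards [hxΩ] with y hy using hφeq y hy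
    rw [gradient, hev.fderiv_eq, fderiv_add hu hx, map_add]
    rfl
  -- Integrability.
  obtain ⟨R, hR⟩ := hgrad _ hK₀ hK₀Ω
  obtain ⟨M, hM⟩ := hbb _ hK₀ hK₀Ω
  obtain ⟨MA, hMA⟩ := hAb _ hK₀ hK₀Ω
  obtain ⟨M', hM'⟩ := N.exists_bound (R + L)
  have hgw : ∀ x, ‖gradient w x‖ ≤ L := fun x =>
    (norm_gradient w x).le.trans (norm_fderiv_le_of_lipschitz ℝ hL)
  have hint : ∀ {f : En n → ℝ} {B : ℝ}, Measurable f → (∀ᵐ x, x ∈ K → ‖f x‖ ≤ B) →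
      IntegrableOn f K := fun hf hB =>
    Measure.integrableOn_of_bounded hKfin hf.aestronglyMeasurable
      ((ae_restrict_iff' hKm).2 hB)
  have hiu : IntegrableOn (fun x => N.F (gradient u x) ^ p) K :=
    hint (hFu.pow_const p) (Eventually.of_forall fun x hx => hM x (hKcl hx))
  have hiφ : IntegrableOn (fun x => N.F (gradient φ x) ^ p) K := by
    refine hint (B := M' ^ p) (hFφ.pow_const p) ?_
    filter_upwards [hgφ] with x hx hxK
    refine hpow (by linarith) (hM' _ ?_).1
    rw [hx hxK]
    exact (norm_add_le _ _).trans (add_le_add (hR x (hKcl hxK)) (hgw x))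
  have hiA : IntegrableOn (fun x => ⟪A x, gradient w x⟫) K := by
    refine hint (B := MA * L) (hA.inner (measurable_gradient w))
      (Eventually.of_forall fun x hx => (norm_inner_le_norm _ _).trans ?_)
    have := hMA x (hKcl hx)
    exact mul_le_mul this (hgw x) (norm_nonneg _) ((norm_nonneg _).trans this)
  have hmul : ∀ {g : En n → ℝ}, ContinuousOn g Ω →
      IntegrableOn (fun x => g x * N.F (gradient u x) ^ p) K := by
    intro g hg
    obtain ⟨B, hB⟩ := hK₀.exists_bound_of_continuousOn (hg.mono hK₀Ω)
    exact Integrable.bdd_mul hiu ((hg.mono hKΩ).aestronglyMeasurable hKm)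
      ((ae_restrict_iff' hKm).2 (Eventually.of_forall fun x hx => hB x (hKcl hx)))
  have hucont := hC1.continuousOn
  have hφcont : ContinuousOn φ Ω :=
    (hucont.add hL.continuous.continuousOn).congr hφeq
  have hiw : IntegrableOn (fun x => N.F (gradient u x) ^ p * w x) K := by
    simpa only [mul_comm] using hmul hL.continuous.continuousOn
  have hzero : ∫ x in K, (⟪A x, gradient w x⟫ + N.F (gradient u x) ^ p * w x) = 0 := by
    rw [integral_add hiA hiw, hweak, neg_add_cancel]
  have hi₁ := (hiu.const_mul (1 / p)).add (hmul hucont)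
  have hi₂ := (hiφ.const_mul (1 / p)).add (hmul hφcont)
  calc ∫ x in K, (1 / p * N.F (gradient u x) ^ p + u x * N.F (gradient u x) ^ p)
      = ∫ x in K, ((1 / p * N.F (gradient u x) ^ p + u x * N.F (gradient u x) ^ p) +
          (⟪A x, gradient w x⟫ + N.F (gradient u x) ^ p * w x)) := by
        refine Eq.trans ?_ (integral_add hi₁ (hiA.add hiw)).symm
        simp only [Pi.add_apply, hzero, add_zero]
    _ ≤ ∫ x in K, (1 / p * N.F (gradient φ x) ^ p + φ x * N.F (gradient u x) ^ p) := by
        refine integral_mono_ae (by exact hi₁.add (hiA.add hiw)) (by exact hi₂)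
          ((ae_restrict_iff' hKm).2 ?_)
        filter_upwards [hgφ] with x hx hxK
        have h := N.rpow_add_inner_le hp (gradient u x) (gradient w x)
        simp only [hx hxK, hφeq x (hKΩ hxK), A, real_inner_smul_left]
        linarith
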